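/- Let 𝒯' be a finite nonempty set of trades such that every pair of trades from 𝒯' is compatible. Then 𝒯' is compatible, i.e., there exists a price movement M closing all trades of 𝒯' such that every trade of 𝒯' is won by M. -/

import Mathlib

/-- A trade: opening price, winning price, losing price, size. -/
structure Trade where
  op : ℤ
  win : ℤ
  lose : ℤ
  size : ℚ
  deriving DecidableEq

/-- A buy: `w(T) > o(T) > ℓ(T)` and `w(T) > 0 > ℓ(T)`. -/
def Trade.IsBuy (T : Trade) : Prop :=
  T.win > T.op ∧ T.op > T.lose ∧ T.win > 0 ∧ 0 > T.lose

/-- A sell: `w(T) < o(T) < ℓ(T)` and `w(T) < 0 < ℓ(T)`. -/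
def Trade.IsSell (T : Trade) : Prop :=
  T.win < T.op ∧ T.op < T.lose ∧ T.win < 0 ∧ 0 < T.lose

/-- A valid trade has positive size and is either a buy or a sell. -/
def Trade.Valid (T : Trade) : Prop := 0 < T.size ∧ (T.IsBuy ∨ T.IsSell)

/-- The sign of a trade: `1` for a buy, `-1` for a sell. -/
def Trade.sign (T : Trade) : ℤ := if T.op < T.win then 1 else -1

/-- A price path starting at `p`: a nonempty finite sequence of integer prices whose
first element is `p` and in which consecutive prices differ by exactly 1. -/
def IsPricePath (p : ℤ) (M : List ℤ) : Prop :=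
  M ≠ [] ∧ M.head? = some p ∧ M.Chain' (fun a b => b = a + 1 ∨ b = a - 1)

/-- A price movement is a price path starting at `0`. -/
def IsPriceMovement (M : List ℤ) : Prop := IsPricePath 0 M

/-- `w` is reached by `M`, and is reached before `l` is. -/
def ReachesFirst (w l : ℤ) (M : List ℤ) : Prop :=
  ∃ i : Fin M.length, M.get i = w ∧ ∀ j : Fin M.length, (j : ℕ) < (i : ℕ) → M.get j ≠ l

/-- `T` is won by `M`: the winning price is reached first. -/
def Trade.Wins (T : Trade) (M : List ℤ) : Prop := ReachesFirst T.win T.lose M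

/-- `T` is lost by `M`: the losing price is reached first. -/
def Trade.Loses (T : Trade) (M : List ℤ) : Prop := ReachesFirst T.lose T.win M

/-- `M` closes `T`: it reaches at least one of the winning/losing prices. -/
def Trade.ClosedBy (T : Trade) (M : List ℤ) : Prop := T.win ∈ M ∨ T.lose ∈ M

open Classical in
/-- The closing price of `T` under `M`: whichever of `w(T)`, `ℓ(T)` is reached first. -/
noncomputable def Trade.closePrice (T : Trade) (M : List ℤ) : ℤ :=
  if T.Wins M then T.win else T.lose

/-- The broker's profit from `T` under `M`: `σ(T)·(close(T,M) − o(T))·s(T)`. -/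
noncomputable def Trade.profit (T : Trade) (M : List ℤ) : ℚ :=
  ((T.sign * (T.closePrice M - T.op) : ℤ) : ℚ) * T.size

/-- A set of trades is compatible if some price movement closes all of them
and wins all of them. -/
def Compatible (S : Set Trade) : Prop :=
  ∃ M : List ℤ, IsPriceMovement M ∧ (∀ T ∈ S, T.ClosedBy M) ∧ ∀ T ∈ S, T.Wins M

/-- Reaching the winning price of `T` from `0` passes through the losing price of `U`. -/
def Trade.Blocks (U T : Trade) : Prop :=
  (0 < U.lose ∧ U.lose ≤ T.win) ∨ (T.win ≤ U.lose ∧ U.lose < 0)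

theorem Trade.Valid.signs {T : Trade} (h : T.Valid) :
    (T.lose < 0 ∧ 0 < T.win) ∨ (T.win < 0 ∧ 0 < T.lose) := by
  rcases h.2 with ⟨_, _, h₁, h₂⟩ | ⟨_, _, h₁, h₂⟩
  · exact Or.inl ⟨h₂, h₁⟩
  · exact Or.inr ⟨h₁, h₂⟩

/-- Discrete intermediate value theorem: a price movement visits every price between `0` and
the price at time `i` no later than at time `i`. -/
theorem IsPriceMovement.exists_getElem_eq {M : List ℤ} (hM : IsPriceMovement M) {l : ℤ}
    (i : ℕ) (hi : i < M.length) (hl : (0 ≤ l ∧ l ≤ M[i]) ∨ (M[i] ≤ l ∧ l ≤ 0)) :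
    ∃ (k : ℕ) (hk : k < M.length), k ≤ i ∧ M[k] = l := by
  induction i with
  | zero =>
    have h0 : M[0] = 0 := by
      have h := hM.2.1
      rw [List.head?_eq_getElem?, List.getElem?_eq_getElem hi] at h
      exact Option.some.inj h
    exact ⟨0, hi, le_rfl, by omega⟩
  | succ i ih =>
    have hstep := List.isChain_iff_getElem.mp hM.2.2 i hi
    by_cases hl' : (0 ≤ l ∧ l ≤ M[i]) ∨ (M[i] ≤ l ∧ l ≤ 0)
    · obtain ⟨k, hk, hki, hkl⟩ := ih (by omega) hl'
      exact ⟨k, hk, by omega, hkl⟩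
    · exact ⟨i + 1, hi, le_rfl, by omega⟩

/-- Two trades won by the same price movement do not block each other. -/
theorem IsPriceMovement.not_blocks_and_blocks {M : List ℤ} (hM : IsPriceMovement M)
    {T U : Trade} (hT : T.Valid) (hU : U.Valid) (hTM : T.Wins M) (hUM : U.Wins M) :
    ¬ (U.Blocks T ∧ T.Blocks U) := by
  rintro ⟨hUT, hTU⟩
  obtain ⟨i, hi, hiT⟩ := hTM
  obtain ⟨j, hj, hjU⟩ := hUM
  simp only [List.get_eq_getElem] at hi hj hiT hjU
  have hTs := hT.signs
  have hUs := hU.signs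
  unfold Trade.Blocks at hUT hTU
  rcases le_total (i : ℕ) j with hij | hij
  · obtain ⟨k, hk, hki, hkl⟩ := hM.exists_getElem_eq (l := U.lose) i i.2 (by omega)
    rcases (hki.trans hij).lt_or_eq with hkj | rfl
    · exact hjU ⟨k, hk⟩ hkj hkl
    · omega
  · obtain ⟨k, hk, hkj, hkl⟩ := hM.exists_getElem_eq (l := T.lose) j j.2 (by omega)
    rcases (hkj.trans hij).lt_or_eq with hki | rfl
    · exact hiT ⟨k, hk⟩ hki hkl
    · omega

theorem ReachesFirst.append_left {w l : ℤ} {M : List ℤ} (h : ReachesFirst w l M)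
    {P : List ℤ} (hP : l ∉ P) : ReachesFirst w l (P ++ M) := by
  obtain ⟨i, hi, hil⟩ := h
  refine ⟨⟨P.length + i, by simp⟩, by simpa using hi, ?_⟩
  rintro ⟨j, hj⟩ hji heq
  simp only [List.get_eq_getElem] at hji heq hil
  rcases lt_or_ge j P.length with hjP | hjP
  · rw [List.getElem_append_left hjP] at heq
    exact hP (heq ▸ List.getElem_mem hjP)
  · rw [List.getElem_append_right hjP] at heq
    have hj' : j - P.length < M.length := by
      rw [List.length_append] at hj
      omega
    exact hil ⟨j - P.length, hj'⟩ (show j - P.length < i by omega) heq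

theorem reachesFirst_append_of_mem {w l : ℤ} {P : List ℤ} (hw : w ∈ P) (hl : l ∉ P)
    (M : List ℤ) : ReachesFirst w l (P ++ M) := by
  obtain ⟨i, hi, rfl⟩ := List.mem_iff_getElem.mp hw
  refine ⟨⟨i, by rw [List.length_append]; omega⟩, by simp [hi], ?_⟩
  rintro ⟨j, hj⟩ hji heq
  have hjP : j < P.length := lt_trans hji hi
  rw [List.get_eq_getElem, List.getElem_append_left hjP] at heq
  exact hl (heq ▸ List.getElem_mem hjP)

theorem Trade.Wins.closedBy {T : Trade} {M : List ℤ} (h : T.Wins M) : T.ClosedBy M := by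
  obtain ⟨i, hi, -⟩ := h
  exact Or.inl (hi ▸ List.get_mem M i)

theorem IsPricePath.cons {p q : ℤ} {M : List ℤ} (hM : IsPricePath p M)
    (hq : p = q + 1 ∨ p = q - 1) : IsPricePath q (q :: M) := by
  refine ⟨by simp, by simp, List.isChain_cons.mpr ⟨?_, hM.2.2⟩⟩
  intro y hy
  rw [hM.2.1, Option.mem_some_iff] at hy
  exact hy ▸ hq

/-- A price path from `p` can be preceded by an excursion from `p` to any `q ≠ p` and back that
stays between `p` and `q`. -/
theorem IsPricePath.exists_excursion (n : ℕ) {p q : ℤ} {M : List ℤ} (hM : IsPricePath p M)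
    (hn : (q - p).natAbs = n + 1) :
    ∃ P : List ℤ, IsPricePath p (P ++ M) ∧ q ∈ P ∧
      ∀ x ∈ P, (p ≤ x ∧ x ≤ q) ∨ (q ≤ x ∧ x ≤ p) := by
  induction n generalizing p M with
  | zero =>
    refine ⟨[p, q], (hM.cons (q := q) (by omega)).cons (by omega), by simp, ?_⟩
    intro x hx
    simp only [List.mem_cons, List.not_mem_nil, or_false] at hx
    omega
  | succ n ih =>
    obtain ⟨r, hr, hrq, hpr⟩ : ∃ r : ℤ, (r = p + 1 ∨ r = p - 1) ∧ (q - r).natAbs = n + 1 ∧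
        ((p ≤ r ∧ r ≤ q) ∨ (q ≤ r ∧ r ≤ p)) := by
      rcases le_total p q with h | h
      · exact ⟨p + 1, by omega, by omega, by omega⟩
      · exact ⟨p - 1, by omega, by omega, by omega⟩
    obtain ⟨P, hP, hqP, hPx⟩ := ih (hM.cons (q := r) (by omega)) hrq
    refine ⟨p :: (P ++ [r]), ?_, by simp [hqP], ?_⟩
    · simpa using hP.cons hr
    · intro x hx
      simp only [List.mem_cons, List.mem_append, List.not_mem_nil, or_false] at hx
      rcases hx with rfl | hx | rfl
      · omega
      · have := hPx x hx
        omega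
      · exact hpr

/-- If no two trades of a finite nonempty set block each other, then some trade of the set is
not blocked at all. -/
theorem exists_forall_not_blocks (S : Finset Trade) (hne : S.Nonempty)
    (hval : ∀ T ∈ S, T.Valid) (hS : ∀ T ∈ S, ∀ U ∈ S, ¬ (U.Blocks T ∧ T.Blocks U)) :
    ∃ T ∈ S, ∀ U ∈ S, ¬ U.Blocks T := by
  by_contra! hcon
  obtain ⟨T, hT, hTmin⟩ := S.exists_min_image (fun T => T.win.natAbs) hne
  obtain ⟨U, hU, hUT⟩ := hcon T hT
  obtain ⟨V, hV, hVmin⟩ := (S.filter fun V => V.win.sign = U.win.sign).exists_min_image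
    (fun T => T.win.natAbs) ⟨U, by simp [hU]⟩
  rw [Finset.mem_filter] at hV
  obtain ⟨W, hW, hWV⟩ := hcon V hV.1
  have hTW := hTmin W hW
  have hVU := hVmin U (by simp [hU])
  have hTs := (hval T hT).signs
  have hUs := (hval U hU).signs
  have hVs := (hval V hV.1).signs
  have hWs := (hval W hW).signs
  have hVsign : 0 < V.win ↔ 0 < U.win := by
    rw [← Int.sign_eq_one_iff_pos, hV.2, Int.sign_eq_one_iff_pos]
  apply hS U hU W hW
  unfold Trade.Blocks at *
  constructor <;> omega

/-- A finite set of trades, no two of which block each other, is compatible. -/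
theorem compatible_of_not_blocks (S : Finset Trade) (hval : ∀ T ∈ S, T.Valid)
    (hS : ∀ T ∈ S, ∀ U ∈ S, ¬ (U.Blocks T ∧ T.Blocks U)) : Compatible (S : Set Trade) := by
  induction S using Finset.strongInduction with
  | H S ih =>
  rcases S.eq_empty_or_nonempty with rfl | hne
  · exact ⟨[0], ⟨by simp, by simp, List.isChain_singleton 0⟩, by simp, by simp⟩
  obtain ⟨T, hT, hfree⟩ := exists_forall_not_blocks S hne hval hS
  obtain ⟨M, hM, -, hwins⟩ := ih (S.erase T) (Finset.erase_ssubset hT)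
    (fun U hU => hval U (Finset.mem_of_mem_erase hU))
    (fun U hU V hV => hS U (Finset.mem_of_mem_erase hU) V (Finset.mem_of_mem_erase hV))
  have hTs := (hval T hT).signs
  obtain ⟨P, hP, hTP, hPx⟩ := IsPricePath.exists_excursion (T.win.natAbs - 1)
    (q := T.win) hM (by omega)
  have hlose : ∀ U ∈ S, U.lose ∉ P := by
    intro U hU hmem
    have hx := hPx _ hmem
    have hUs := (hval U hU).signs
    have hUT := hfree U hU
    unfold Trade.Blocks at hUT
    omega
  have hall : ∀ U ∈ (S : Set Trade), U.Wins (P ++ M) := by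
    intro U hU
    by_cases hUT : U = T
    · subst hUT
      exact reachesFirst_append_of_mem hTP (hlose U hU) M
    · exact (hwins U (by simpa [hUT] using hU)).append_left (hlose U hU)
  exact ⟨P ++ M, hP, fun U hU => (hall U hU).closedBy, hall⟩

/-- If every pair of trades from a finite nonempty set `S` of trades is compatible,
then `S` itself is compatible: some price movement closes all trades of `S`
winning every one of them. -/
theorem pairwise_compatible_compatible (S : Set Trade) (hfin : S.Finite)
    (hne : S.Nonempty) (hval : ∀ T ∈ S, T.Valid)
    (hpair : ∀ T₁ ∈ S, ∀ T₂ ∈ S, Compatible {T₁, T₂}) :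
    Compatible S := by
  have hpair' : ∀ T ∈ hfin.toFinset, ∀ U ∈ hfin.toFinset, ¬ (U.Blocks T ∧ T.Blocks U) := by
    intro T hT U hU
    rw [Set.Finite.mem_toFinset] at hT hU
    obtain ⟨M, hM, -, hwins⟩ := hpair T hT U hU
    exact hM.not_blocks_and_blocks (hval T hT) (hval U hU) (hwins T (by simp)) (hwins U (by simp))
  simpa using compatible_of_not_blocks hfin.toFinset (by simpa using hval) hpair'
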